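/- arXiv:math/0003020 — 2 statements merged into one kernel-verified Lean document; each statement's English description precedes it below -/
import Mathlib

section
/- Let X and Y be real Banach spaces, k ≥ 1 an integer and P : X → Y a continuous k-homogeneous polynomial. The following are equivalent: (i) P is unconditionally converging; (ii) P maps every WUC-set in X to a relatively (norm) compact subset of Y; (iii) P maps every WUC-set in X to a relatively weakly compact subset of Y. -/
open Filter Topology Metric

noncomputable section

/-- The Banach space `c₀` of real sequences converging to zero, with the sup norm. -/
abbrev c0 : Type := ZeroAtInftyContinuousMap ℕ ℝ

/-- The unit vector basis of `c₀`. -/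
def e (n : ℕ) : c0 :=
  { toFun := fun i => if i = n then (1 : ℝ) else 0
    continuous_toFun := continuous_of_discreteTopology
    zero_at_infty' := by
      rw [Filter.cocompact_eq_cofinite]
      refine tendsto_const_nhds.congr' ?_
      have h : {n}ᶜ ∈ (Filter.cofinite : Filter ℕ) := by simp [Filter.cofinite]
      filter_upwards [h] with i hi
      simp only [Set.mem_compl_iff, Set.mem_singleton_iff] at hi
      simp [hi] }

/-- A series `∑ xₙ` is weakly unconditionally Cauchy (w.u.C.) if `∑ |φ (xₙ)| < ∞` for every
continuous linear functional `φ`. -/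
def WUC {X : Type*} [NormedAddCommGroup X] [NormedSpace ℝ X] (x : ℕ → X) : Prop :=
  ∀ φ : X →L[ℝ] ℝ, Summable fun n => |φ (x n)|

/-- A sequence is equivalent to the unit vector basis of `c₀`: there are `0 < c ≤ C` with
`c · maxᵢ |aᵢ| ≤ ‖∑ aᵢ xᵢ‖ ≤ C · maxᵢ |aᵢ|` for all finite scalar families. -/
def IsEquivC0Basis {X : Type*} [NormedAddCommGroup X] [NormedSpace ℝ X] (x : ℕ → X) : Prop :=
  ∃ c C : ℝ, 0 < c ∧ c ≤ C ∧ ∀ (n : ℕ) (a : ℕ → ℝ),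
    c * (⨆ i : Fin n, |a i|) ≤ ‖∑ i ∈ Finset.range n, a i • x i‖ ∧
    ‖∑ i ∈ Finset.range n, a i • x i‖ ≤ C * (⨆ i : Fin n, |a i|)

/-- A map (polynomial) is unconditionally converging if for every w.u.C. series `∑ xₙ` the
sequence of values at the partial sums converges in norm. -/
def UCPoly {X Y : Type*} [NormedAddCommGroup X] [NormedSpace ℝ X]
    [NormedAddCommGroup Y] [NormedSpace ℝ Y] (P : X → Y) : Prop :=
  ∀ x : ℕ → X, WUC x →
    ∃ L : Y, Tendsto (fun n => P (∑ i ∈ Finset.range n, x i)) atTop (𝓝 L)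

/-- An operator is unconditionally converging if it maps w.u.C. series to unconditionally
convergent series. -/
def UCOp {X Y : Type*} [NormedAddCommGroup X] [NormedSpace ℝ X]
    [NormedAddCommGroup Y] [NormedSpace ℝ Y] (T : X → Y) : Prop :=
  ∀ x : ℕ → X, WUC x → Summable fun n => T (x n)

/-- A map (polynomial or operator) is compact if the image of the closed unit ball is
relatively norm compact. -/
def CompactMap {X Y : Type*} [NormedAddCommGroup X] [NormedSpace ℝ X]
    [NormedAddCommGroup Y] [NormedSpace ℝ Y] (P : X → Y) : Prop :=
  IsCompact (closure (P '' Metric.closedBall 0 1))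

/-- A set is relatively weakly compact if its closure in the weak topology is compact. -/
def RelWeakCompact {Y : Type*} [NormedAddCommGroup Y] [NormedSpace ℝ Y] (s : Set Y) : Prop :=
  IsCompact (closure ((toWeakSpace ℝ Y) '' s))

/-- A WUC-set is the image of the closed unit ball of `c₀` under a bounded operator. -/
def IsWUCSet {X : Type*} [NormedAddCommGroup X] [NormedSpace ℝ X] (s : Set X) : Prop :=
  ∃ T : c0 →L[ℝ] X, s = ⇑T '' Metric.closedBall 0 1

set_option linter.unusedSectionVars false

section helpers

variable {X Y : Type*} [NormedAddCommGroup X] [NormedSpace ℝ X]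
    [NormedAddCommGroup Y] [NormedSpace ℝ Y]

/-- `R` has degree at most `n` in the sense of finite differences. -/
def Deg : ℕ → (X → Y) → Prop
  | 0, R => ∀ x y, R x = R y
  | n + 1, R => ∀ h : X, Deg n (fun x => R (x + h) - R x)

lemma deg_mono : ∀ (n : ℕ) (R : X → Y), Deg n R → Deg (n + 1) R
  | 0, R, H => by
      intro h x y
      simp only [H (x + h) x, H (y + h) y, sub_self]
  | n + 1, R, H => fun h => deg_mono n _ (H h)

lemma deg_zero : ∀ (n : ℕ), Deg n (fun _ : X => (0 : Y))
  | 0 => fun _ _ => rfl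
  | n + 1 => deg_mono n _ (deg_zero n)

lemma deg_add : ∀ (n : ℕ) (R R' : X → Y), Deg n R → Deg n R' → Deg n (fun x => R x + R' x)
  | 0, R, R', H, H' => fun x y => by simp only [H x y, H' x y]
  | n + 1, R, R', H, H' => fun h => by
      have := deg_add n _ _ (H h) (H' h)
      have e1 : (fun x => R (x + h) + R' (x + h) - (R x + R' x)) =
        (fun x => (R (x + h) - R x) + (R' (x + h) - R' x)) := by
        funext x; abel
      rw [e1]; exact this

lemma deg_sum {ι : Type*} (n : ℕ) (s : Finset ι) (R : ι → X → Y) (H : ∀ i ∈ s, Deg n (R i)) :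
    Deg n (fun x => ∑ i ∈ s, R i x) := by
  classical
  induction s using Finset.induction_on with
  | empty => simpa using deg_zero n
  | insert a s ha ih =>
    simp only [Finset.sum_insert ha]
    exact deg_add n _ _ (H a (by simp)) (ih (fun i hi => H i (by simp [hi])))

lemma deg_comp (ψ : Y →L[ℝ] ℝ) : ∀ (n : ℕ) (R : X → Y), Deg n R → Deg n (fun x => ψ (R x))
  | 0, R, H => fun x y => by simp only [H x y]
  | n + 1, R, H => fun h => by
      have := deg_comp ψ n _ (H h)
      simpa only [map_sub] using this

lemma deg_multilinear {ι : Type*} [Fintype ι] [DecidableEq ι]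
    (A : MultilinearMap ℝ (fun _ : ι => X) Y) :
    ∀ (n : ℕ) (s : Finset ι) (v : ι → X), s.card ≤ n →
      Deg n (fun x => A (s.piecewise (fun _ => x) v))
  | 0, s, v, hs => by
      have : s = ∅ := by simpa using hs
      subst this
      intro x y; simp
  | n + 1, s, v, hs => fun h => by
      have key : (fun x => A (s.piecewise (fun _ => x + h) v) - A (s.piecewise (fun _ => x) v)) =
          fun x => ∑ t ∈ s.ssubsets,
            A (t.piecewise (fun _ => x) (s.piecewise (fun _ => h) v)) := by
        funext x
        have h1 := A.map_piecewise_add (fun _ => x) (s.piecewise (fun _ => h) v) s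
        have h2 : s.piecewise ((fun _ => x) + s.piecewise (fun _ => h) v)
            (s.piecewise (fun _ => h) v) = s.piecewise (fun _ => x + h) v := by
          funext i
          by_cases hi : i ∈ s <;> simp [Finset.piecewise, hi]
        have h3 : s.piecewise (fun _ => x) (s.piecewise (fun _ => h) v) =
            s.piecewise (fun _ => x) v := by
          funext i
          by_cases hi : i ∈ s <;> simp [Finset.piecewise, hi]
        rw [h2] at h1
        rw [h1, ← Finset.sum_erase_add _ _ (Finset.mem_powerset_self s), h3, add_sub_cancel_right]
        rfl
      rw [key]
      refine deg_sum n _ _ (fun t ht => deg_multilinear A n t _ ?_)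
      have := Finset.card_lt_card (Finset.mem_ssubsets.1 ht)
      omega

lemma wuc_cons {x : ℕ → X} (hx : WUC x) (h : X) :
    WUC (fun n => Nat.casesOn n h x : ℕ → X) := by
  intro φ
  rw [← summable_nat_add_iff 1]
  exact hx φ

lemma sum_cons (x : ℕ → X) (h : X) (M : Finset ℕ) :
    ∑ i ∈ M.map ⟨Nat.succ, Nat.succ_injective⟩, (Nat.casesOn i h x : X) = ∑ i ∈ M, x i := by
  rw [Finset.sum_map]; rfl

lemma sum_cons' (x : ℕ → X) (h : X) (M : Finset ℕ) :
    ∑ i ∈ insert 0 (M.map ⟨Nat.succ, Nat.succ_injective⟩), (Nat.casesOn i h x : X)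
      = ∑ i ∈ M, x i + h := by
  rw [Finset.sum_insert (by simp), sum_cons, add_comm]; rfl

/-- Bounded on the subsums of w.u.C. series. -/
def BG (R : X → Y) : Prop := ∀ x : ℕ → X, WUC x → ∃ C, ∀ M : Finset ℕ, ‖R (∑ i ∈ M, x i)‖ ≤ C

lemma BG.diff {R : X → Y} (H : BG R) (h : X) : BG (fun x => R (x + h) - R x) := by
  intro x hx
  obtain ⟨C, hC⟩ := H _ (wuc_cons hx h)
  refine ⟨C + C, fun M => (norm_sub_le _ _).trans (add_le_add ?_ ?_)⟩
  · have := hC (insert 0 (M.map ⟨Nat.succ, Nat.succ_injective⟩))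
    rwa [sum_cons'] at this
  · have := hC (M.map ⟨Nat.succ, Nat.succ_injective⟩)
    rwa [sum_cons] at this

/-- Weakly compact on the subsums of w.u.C. series. -/
def WG (R : X → Y) : Prop := ∀ x : ℕ → X, WUC x → ∃ K : Set (WeakSpace ℝ Y), IsCompact K ∧
  ∀ M : Finset ℕ, toWeakSpace ℝ Y (R (∑ i ∈ M, x i)) ∈ K

lemma WG.diff {R : X → Y} (H : WG R) (h : X) : WG (fun x => R (x + h) - R x) := by
  intro x hx
  obtain ⟨K, hK, hC⟩ := H _ (wuc_cons hx h)
  refine ⟨(fun p : WeakSpace ℝ Y × WeakSpace ℝ Y => p.1 - p.2) '' (K ×ˢ K),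
    (hK.prod hK).image continuous_sub, fun M => ?_⟩
  refine ⟨(toWeakSpace ℝ Y (R (∑ i ∈ M, x i + h)), toWeakSpace ℝ Y (R (∑ i ∈ M, x i))),
    ⟨?_, ?_⟩, ?_⟩
  · have := hC (insert 0 (M.map ⟨Nat.succ, Nat.succ_injective⟩))
    rwa [sum_cons'] at this
  · have := hC (M.map ⟨Nat.succ, Nat.succ_injective⟩)
    rwa [sum_cons] at this
  · simp only [map_sub]

lemma weak_cont (ψ : Y →L[ℝ] ℝ) :
    Continuous (fun y : WeakSpace ℝ Y => ψ ((toWeakSpace ℝ Y).symm y)) :=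
  WeakBilin.eval_continuous (topDualPairing ℝ Y).flip ψ

lemma WG.bg {R : X → Y} (H : WG R) (ψ : Y →L[ℝ] ℝ) : BG (fun x => ψ (R x)) := by
  intro x hx
  obtain ⟨K, hK, hC⟩ := H x hx
  obtain ⟨C, h⟩ := hK.exists_bound_of_continuousOn (weak_cont ψ).continuousOn
  exact ⟨C, fun M => by simpa using h _ (hC M)⟩

/-- Uniform continuity on the subsums of w.u.C. series. -/
def NC (R : X → Y) : Prop := ∀ x : ℕ → X, WUC x → ∀ ε > 0, ∃ m : ℕ, ∀ M M' : Finset ℕ,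
  (∀ i < m, i ∈ M ↔ i ∈ M') → ‖R (∑ i ∈ M, x i) - R (∑ i ∈ M', x i)‖ ≤ ε

/-- Smallness on far out blocks. -/
def SA (R : X → Y) : Prop := ∀ x : ℕ → X, WUC x → ∀ ε > 0, ∃ p : ℕ, ∀ w : Finset ℕ,
  (∀ i ∈ w, p ≤ i) → ‖R (∑ i ∈ w, x i) - R 0‖ ≤ ε

lemma stepB {R : X → Y} (H : ∀ h, NC (fun x => R (x + h) - R x)) (hA : SA R) : NC R := by
  intro x hx ε hε
  obtain ⟨p, hp⟩ := hA x hx (ε / 4) (by positivity)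
  choose m hm using fun F : Finset ℕ => H (∑ i ∈ F, x i) x hx (ε / 4) (by positivity)
  refine ⟨max p ((Finset.range p).powerset.sup m), fun M M' hMM => ?_⟩
  have hF : M.filter (· < p) = M'.filter (· < p) := by
    ext i
    simp only [Finset.mem_filter]
    constructor
    · rintro ⟨h1, h2⟩
      exact ⟨(hMM i (lt_max_of_lt_left h2)).1 h1, h2⟩
    · rintro ⟨h1, h2⟩
      exact ⟨(hMM i (lt_max_of_lt_left h2)).2 h1, h2⟩
  have hmF : m (M.filter (· < p)) ≤ (Finset.range p).powerset.sup m := by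
    apply Finset.le_sup
    simp [Finset.subset_iff]
  have e1 : ∑ i ∈ M, x i = ∑ i ∈ M.filter (¬ · < p), x i + ∑ i ∈ M.filter (· < p), x i := by
    rw [add_comm]; exact (Finset.sum_filter_add_sum_filter_not M _ x).symm
  have e2 : ∑ i ∈ M', x i = ∑ i ∈ M'.filter (¬ · < p), x i + ∑ i ∈ M.filter (· < p), x i := by
    rw [add_comm, hF]; exact (Finset.sum_filter_add_sum_filter_not M' _ x).symm
  have h1 := hp (M.filter (¬ · < p)) (by simp)
  have h2 := hp (M'.filter (¬ · < p)) (by simp)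
  have h3 := hm (M.filter (· < p)) (M.filter (¬ · < p)) (M'.filter (¬ · < p)) (by
    intro i hi
    simp only [Finset.mem_filter]
    rw [hMM i (lt_max_of_lt_right (lt_of_lt_of_le hi hmF))])
  rw [e1, e2]
  set a := ∑ i ∈ M.filter (¬ · < p), x i
  set b := ∑ i ∈ M'.filter (¬ · < p), x i
  set f := ∑ i ∈ M.filter (· < p), x i
  have : R (a + f) - R (b + f) = ((R (a + f) - R a) - (R (b + f) - R b)) + (R a - R 0)
      - (R b - R 0) := by abel
  rw [this]
  calc _ ≤ ‖((R (a + f) - R a) - (R (b + f) - R b))‖ + ‖R a - R 0‖ + ‖R b - R 0‖ :=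
        (norm_sub_le _ _).trans (add_le_add_left (norm_add_le _ _) _)
    _ ≤ ε := by linarith

lemma scalarA_aux {g : X → ℝ} (H : ∀ h, NC (fun x => g (x + h) - g x)) (hB : BG g)
    {x : ℕ → X} (hx : WUC x) {ε : ℝ} (hε : 0 < ε) (σ : ℝ) (hσ : |σ| = 1) :
    ∃ p : ℕ, ∀ w : Finset ℕ, (∀ i ∈ w, p ≤ i) → σ * (g (∑ i ∈ w, x i) - g 0) ≤ ε := by
  by_contra! hcon
  have step : ∀ j : ℕ, ∃ M : Finset ℕ, σ * (g (∑ i ∈ M, x i) - g 0) ≥ j * (ε / 2) := by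
    intro j
    induction j with
    | zero => exact ⟨∅, by simp⟩
    | succ j ih =>
      obtain ⟨M, hM⟩ := ih
      obtain ⟨m, hm⟩ := H (∑ i ∈ M, x i) x hx (ε / 2) (by positivity)
      obtain ⟨w, hw, hgw⟩ := hcon (max m (M.sup id + 1))
      have hdis : Disjoint w M := by
        rw [Finset.disjoint_left]
        intro i hi hiM
        have h1 := hw i hi
        have h2 : i ≤ M.sup id := Finset.le_sup (f := id) hiM
        have := le_max_right m (M.sup id + 1)
        omega
      have h3 := hm w ∅ (by
        intro i hi
        simp only [Finset.notMem_empty, iff_false]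
        intro hiw
        have h1 := hw i hiw
        have := le_max_left m (M.sup id + 1)
        omega)
      refine ⟨w ∪ M, ?_⟩
      rw [Finset.sum_union hdis]
      simp only [Finset.sum_empty, zero_add, Real.norm_eq_abs] at h3
      set a := ∑ i ∈ w, x i
      set b := ∑ i ∈ M, x i
      have h4 : |σ * (g (a + b) - g a - (g b - g 0))| ≤ ε / 2 := by
        rw [abs_mul, hσ, one_mul]; exact h3
      have h5 := (abs_le.1 h4).1
      push_cast
      nlinarith
  obtain ⟨C, hC⟩ := hB x hx
  obtain ⟨j, hj⟩ := exists_nat_gt ((C + C) / (ε / 2))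
  rw [div_lt_iff₀ (by positivity)] at hj
  obtain ⟨M, hM⟩ := step j
  have h1 := hC M
  have h2 := hC ∅
  simp only [Finset.sum_empty] at h2
  have h3 : σ * (g (∑ i ∈ M, x i) - g 0) ≤ C + C := by
    refine (le_abs_self _).trans ?_
    rw [abs_mul, hσ, one_mul]
    exact (abs_sub _ _).trans (add_le_add h1 h2)
  linarith

lemma scalarA {g : X → ℝ} (H : ∀ h, NC (fun x => g (x + h) - g x)) (hB : BG g) : SA g := by
  intro x hx ε hε
  obtain ⟨p, hp⟩ := scalarA_aux H hB hx hε 1 (by simp)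
  obtain ⟨q, hq⟩ := scalarA_aux H hB hx hε (-1) (by simp)
  refine ⟨max p q, fun w hw => ?_⟩
  have h1 := hp w (fun i hi => (le_max_left _ _).trans (hw i hi))
  have h2 := hq w (fun i hi => (le_max_right _ _).trans (hw i hi))
  rw [Real.norm_eq_abs, abs_le]
  constructor <;> linarith

lemma nc_of_const {R : X → Y} (H : ∀ x y, R x = R y) : NC R := by
  intro x hx ε hε
  refine ⟨0, fun M M' _ => ?_⟩
  rw [H _ (∑ i ∈ M', x i)]
  simpa using hε.le

lemma scalar_nc : ∀ (n : ℕ) (g : X → ℝ), Deg n g → BG g → NC g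
  | 0, _, H, _ => nc_of_const H
  | n + 1, _, H, hB =>
      have IH := fun h => scalar_nc n _ (H h) (hB.diff h)
      stepB IH (scalarA IH hB)

/-- Finite prefix of a subset of `ℕ`. -/
def pre (z : ℕ → Bool) (n : ℕ) : Finset ℕ := (Finset.range n).filter (fun i => z i = true)

lemma mem_pre {z : ℕ → Bool} {n i : ℕ} : i ∈ pre z n ↔ i < n ∧ z i = true := by
  simp [pre]

lemma pre_indicator (M : Finset ℕ) {n : ℕ} (hn : M.sup id < n) :
    pre (fun i => decide (i ∈ M)) n = M := by
  ext i
  simp only [mem_pre, decide_eq_true_eq, and_iff_right_iff_imp]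
  intro hi
  exact lt_of_le_of_lt (Finset.le_sup (f := id) hi) hn

lemma mem_closure_span_of_weak {C : Set Y} {u : ℕ → Y} (hu : ∀ n, u n ∈ C) {y : Y}
    (hy : ∀ ψ : Y →L[ℝ] ℝ, Tendsto (fun n => ψ (u n)) atTop (𝓝 (ψ y))) :
    y ∈ closure (Submodule.span ℝ C : Set Y) := by
  by_contra hcon
  have hconv : Convex ℝ (closure (Submodule.span ℝ C : Set Y)) :=
    (Submodule.convex _).closure
  obtain ⟨f, t, hf1, hf2⟩ := geometric_hahn_banach_closed_point hconv isClosed_closure hcon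
  have h1 : ∀ n, f (u n) ≤ t := fun n =>
    (hf1 _ (subset_closure (Submodule.subset_span (hu n)))).le
  have := le_of_tendsto' (hy f) h1
  linarith

lemma vecA {R : X → Y} (H : ∀ h, NC (fun x => R (x + h) - R x)) (hW : WG R)
    (hS : ∀ ψ : Y →L[ℝ] ℝ, NC (fun x => ψ (R x))) : SA R := by
  intro x hx ε hε
  obtain ⟨K, hK, hKM⟩ := hW x hx
  have hex : ∀ z : ℕ → Bool, ∃ y : Y, ∀ ψ : Y →L[ℝ] ℝ,
      Tendsto (fun n => ψ (R (∑ i ∈ pre z n, x i))) atTop (𝓝 (ψ y)) := by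
    intro z
    obtain ⟨y, -, hy⟩ := hK.exists_mapClusterPt (f := atTop)
      (u := fun n => toWeakSpace ℝ Y (R (∑ i ∈ pre z n, x i)))
      (by rw [Filter.le_principal_iff]; exact Filter.mem_map.2 (Filter.Eventually.of_forall fun n => hKM _))
    refine ⟨(toWeakSpace ℝ Y).symm y, fun ψ => ?_⟩
    have hc : CauchySeq (fun n => ψ (R (∑ i ∈ pre z n, x i))) := by
      rw [Metric.cauchySeq_iff']
      intro δ hδ
      obtain ⟨m, hm⟩ := hS ψ x hx (δ / 2) (by positivity)
      refine ⟨m, fun n hn => ?_⟩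
      rw [dist_eq_norm]
      refine lt_of_le_of_lt (hm _ _ ?_) (half_lt_self hδ)
      intro i hi
      simp only [mem_pre, hi, true_and, and_iff_right_iff_imp]
      intro _; omega
    have := hy.continuousAt_comp (f := fun y => ψ ((toWeakSpace ℝ Y).symm y))
      (weak_cont ψ).continuousAt
    exact le_nhds_of_cauchy_adhp hc this
  choose F hF using hex
  have hFfin : ∀ (M : Finset ℕ), F (fun i => decide (i ∈ M)) = R (∑ i ∈ M, x i) := by
    intro M
    refine (SeparatingDual.eq_iff_forall_dual_eq (R := ℝ)).2 fun ψ => ?_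
    refine tendsto_nhds_unique (hF (fun i => decide (i ∈ M)) ψ) ?_
    refine tendsto_const_nhds.congr' ?_
    filter_upwards [Filter.eventually_gt_atTop (M.sup id)] with n hn
    rw [pre_indicator M hn]
  have hcont : ∀ ψ : Y →L[ℝ] ℝ, Continuous (fun z => ψ (F z)) := by
    intro ψ
    rw [continuous_iff_continuousAt]
    intro z
    rw [Metric.continuousAt_iff']
    intro δ hδ
    obtain ⟨m, hm⟩ := hS ψ x hx (δ / 2) (by positivity)
    have hcyl : PiNat.cylinder z m ∈ 𝓝 z :=
      (PiNat.isOpen_cylinder _ z m).mem_nhds (PiNat.self_mem_cylinder z m)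
    filter_upwards [hcyl] with z' hz'
    rw [dist_eq_norm]
    refine lt_of_le_of_lt ?_ (half_lt_self hδ)
    refine le_of_tendsto' ((hF z' ψ).sub (hF z ψ)).norm (fun n => hm _ _ ?_)
    intro i hi
    rw [mem_pre, mem_pre, hz' i hi]
  set C : Set Y := Set.range (fun M : Finset ℕ => R (∑ i ∈ M, x i)) with hC
  have hsep : TopologicalSpace.IsSeparable (closure (Submodule.span ℝ C : Set Y)) :=
    ((Set.countable_range _).isSeparable.span (R := ℝ)).closure
  have hFmem : ∀ z, F z ∈ closure (Submodule.span ℝ C : Set Y) := fun z =>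
    mem_closure_span_of_weak (u := fun n => R (∑ i ∈ pre z n, x i)) (fun n => Set.mem_range_self (pre z n)) (hF z)
  obtain ⟨D, hDc, hD⟩ := hsep
  have hδ : 0 < ε / 4 := by positivity
  have hclosed : ∀ y : Y, IsClosed {z | F z ∈ closedBall y (ε / 4)} := by
    intro y
    have : {z | F z ∈ closedBall y (ε / 4)} =
        ⋂ ψ : Y →L[ℝ] ℝ, {z | ‖ψ (F z) - ψ y‖ ≤ ε / 4 * ‖ψ‖} := by
      ext z
      simp only [Set.mem_ofPred_eq, mem_closedBall, dist_eq_norm, Set.mem_iInter]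
      constructor
      · intro h ψ
        rw [← map_sub, mul_comm]
        exact (ψ.le_opNorm _).trans (mul_le_mul_of_nonneg_left h (norm_nonneg _))
      · intro h
        refine NormedSpace.norm_le_dual_bound ℝ _ hδ.le fun ψ => ?_
        rw [map_sub]; exact h ψ
    rw [this]
    exact isClosed_iInter fun ψ => isClosed_le ((hcont ψ).sub continuous_const).norm
      continuous_const
  have : Countable D := hDc.to_subtype
  have hcover : ⋃ y : D, {z | F z ∈ closedBall (y : Y) (ε / 4)} = Set.univ := by
    rw [Set.eq_univ_iff_forall]
    intro z
    obtain ⟨y, hy, hyz⟩ := Metric.mem_closure_iff.1 (hD (hFmem z)) _ hδ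
    exact Set.mem_iUnion.2 ⟨⟨y, hy⟩, hyz.le⟩
  obtain ⟨y, z, hz⟩ := nonempty_interior_of_iUnion_of_closed (fun y : D => hclosed y) hcover
  obtain ⟨_, ⟨z0, p, rfl⟩, hzc, hsub⟩ := (PiNat.isTopologicalBasis_cylinders
    (fun _ : ℕ => Bool)).exists_subset_of_mem_open hz isOpen_interior
  have hball : ∀ M : Finset ℕ, (∀ i < p, i ∈ M ↔ i ∈ pre z0 p) →
      ‖R (∑ i ∈ M, x i) - y‖ ≤ ε / 4 := by
    intro M hM
    have : (fun i => decide (i ∈ M)) ∈ PiNat.cylinder z0 p := by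
      intro i hi
      have := hM i hi
      simp only [mem_pre, hi, true_and] at this
      rw [Bool.eq_iff_iff, decide_eq_true_eq, this]
    have h2 := interior_subset (hsub this)
    simp only [Set.mem_ofPred_eq, hFfin, mem_closedBall, dist_eq_norm] at h2
    exact h2
  obtain ⟨m, hm⟩ := H (∑ i ∈ pre z0 p, x i) x hx (ε / 2) (by positivity)
  refine ⟨max m p, fun w hw => ?_⟩
  have hdis : Disjoint w (pre z0 p) := by
    rw [Finset.disjoint_left]
    intro i hi hi2
    have h1 := hw i hi
    have h2 := (mem_pre.1 hi2).1
    have := le_max_right m p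
    omega
  have h1 := hball (w ∪ pre z0 p) (by
    intro i hi
    simp only [Finset.mem_union, or_iff_right_iff_imp]
    intro hiw
    have h1 := hw i hiw
    have := le_max_right m p
    omega)
  have h2 := hball (pre z0 p) (fun i _ => Iff.rfl)
  have h3 := hm w ∅ (by
    intro i hi
    simp only [Finset.notMem_empty, iff_false]
    intro hiw
    have h1 := hw i hiw
    have := le_max_left m p
    omega)
  rw [Finset.sum_union hdis] at h1
  simp only [Finset.sum_empty, zero_add] at h3
  set a := ∑ i ∈ w, x i
  set b := ∑ i ∈ pre z0 p, x i
  have : R a - R 0 = (R (a + b) - y) - (R b - y) - (R (a + b) - R a - (R b - R 0)) := by abel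
  rw [this]
  calc _ ≤ ‖R (a + b) - y‖ + ‖R b - y‖ + ‖R (a + b) - R a - (R b - R 0)‖ :=
        (norm_sub_le _ _).trans (add_le_add_left (norm_sub_le _ _) _)
    _ ≤ ε := by linarith

lemma vec_nc : ∀ (n : ℕ) (R : X → Y), Deg n R → WG R → NC R
  | 0, _, H, _ => nc_of_const H
  | n + 1, R, H, hW =>
      have IH := fun h => vec_nc n _ (H h) (hW.diff h)
      stepB IH (vecA IH hW
        (fun ψ => scalar_nc (n + 1) _ (deg_comp ψ (n + 1) R H) (hW.bg ψ)))

lemma c0_apply_le (v : c0) (i : ℕ) : |v i| ≤ ‖v‖ := by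
  have := BoundedContinuousFunction.norm_coe_le_norm v.toBCF i
  rwa [ZeroAtInftyContinuousMap.norm_toBCF_eq_norm] at this

lemma c0_norm_le (v : c0) {C : ℝ} (hC : 0 ≤ C) (h : ∀ i, |v i| ≤ C) : ‖v‖ ≤ C := by
  rw [← ZeroAtInftyContinuousMap.norm_toBCF_eq_norm]
  exact (BoundedContinuousFunction.norm_le hC).2 h

lemma c0_sum_apply {ι : Type*} (s : Finset ι) (f : ι → c0) (i : ℕ) :
    (∑ j ∈ s, f j) i = ∑ j ∈ s, f j i := by
  classical
  induction s using Finset.induction_on with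
  | empty => simp
  | insert a s ha ih => simp [Finset.sum_insert ha, ih]

lemma c0_tail (v : c0) {δ : ℝ} (hδ : 0 < δ) : ∀ᶠ i in cofinite, |v i| < δ := by
  have h := v.zero_at_infty'
  rw [Filter.cocompact_eq_cofinite] at h
  have := h.eventually (Metric.ball_mem_nhds 0 hδ)
  filter_upwards [this] with i hi
  simpa using hi

lemma e_sum_apply (M : Finset ℕ) (i : ℕ) : (∑ j ∈ M, e j) i = if i ∈ M then 1 else 0 := by
  rw [c0_sum_apply]
  have : ∀ j, (e j) i = if i = j then (1 : ℝ) else 0 := fun j => rfl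
  simp [this]

lemma wuc_bound {x : ℕ → X} (hx : WUC x) : ∃ C : ℝ, 0 ≤ C ∧ ∀ (s : Finset ℕ) (a : ℕ → ℝ) (r : ℝ),
    0 < r → (∀ i ∈ s, |a i| ≤ r) → ‖∑ i ∈ s, a i • x i‖ ≤ C * r := by
  let I := {q : Finset ℕ × (ℕ → ℝ) // ∀ i ∈ q.1, |q.2 i| ≤ 1}
  let g : I → (StrongDual ℝ X →L[ℝ] ℝ) := fun q =>
    NormedSpace.inclusionInDoubleDual ℝ X (∑ i ∈ q.1.1, q.1.2 i • x i)
  obtain ⟨C, hC⟩ := banach_steinhaus (g := g) (by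
    intro φ
    refine ⟨∑' n, |φ (x n)|, fun q => ?_⟩
    have : g q φ = ∑ i ∈ q.1.1, q.1.2 i * φ (x i) := by
      simp [g, NormedSpace.dual_def]
    rw [this]
    calc ‖∑ i ∈ q.1.1, q.1.2 i * φ (x i)‖ ≤ ∑ i ∈ q.1.1, ‖q.1.2 i * φ (x i)‖ := norm_sum_le _ _
      _ ≤ ∑ i ∈ q.1.1, |φ (x i)| := by
          refine Finset.sum_le_sum fun i hi => ?_
          rw [norm_mul]
          exact mul_le_of_le_one_left (norm_nonneg _) (q.2 i hi)
      _ ≤ _ := (hx φ).sum_le_tsum _ (fun i _ => abs_nonneg _))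
  have hC0 : 0 ≤ C := (norm_nonneg _).trans (hC ⟨(∅, 0), by simp⟩)
  refine ⟨C, hC0, fun s a r hr ha => ?_⟩
  have h1 := hC ⟨(s, fun i => r⁻¹ * a i), fun i hi => by
    simp only
    rw [abs_mul, abs_of_pos (inv_pos.2 hr), inv_mul_le_iff₀ hr, mul_one]
    exact ha i hi⟩
  have h2 : ‖∑ i ∈ s, (r⁻¹ * a i) • x i‖ ≤ C := by
    rw [← (NormedSpace.inclusionInDoubleDualLi ℝ (E := X)).norm_map]
    exact h1
  have h3 : ∑ i ∈ s, a i • x i = r • ∑ i ∈ s, (r⁻¹ * a i) • x i := by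
    rw [Finset.smul_sum]
    refine Finset.sum_congr rfl fun i _ => ?_
    rw [smul_smul, mul_inv_cancel_left₀ hr.ne']
  rw [h3, norm_smul, Real.norm_of_nonneg hr.le, mul_comm]
  exact mul_le_mul_of_nonneg_right h2 hr.le

lemma exists_op [CompleteSpace X] {x : ℕ → X} (hx : WUC x) :
    ∃ T : c0 →L[ℝ] X, ∀ M : Finset ℕ, T (∑ i ∈ M, e i) = ∑ i ∈ M, x i := by
  obtain ⟨C, hC0, hC⟩ := wuc_bound hx
  have hsum : ∀ v : c0, Summable (fun i => v i • x i) := by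
    intro v
    rw [summable_iff_vanishing_norm]
    intro ε hε
    have hδ : 0 < ε / (C + 1) := by positivity
    have hfin := c0_tail v hδ
    rw [Filter.eventually_cofinite] at hfin
    refine ⟨hfin.toFinset, fun t ht => ?_⟩
    refine lt_of_le_of_lt (hC t v _ hδ ?_) ?_
    · intro i hi
      by_contra hcon
      refine Finset.disjoint_left.1 ht hi ?_
      simp only [Set.Finite.mem_toFinset]
      exact fun h => hcon h.le
    · rw [mul_div_assoc', div_lt_iff₀ (by positivity)]
      nlinarith
  let T0 : c0 →ₗ[ℝ] X :=
    { toFun := fun v => ∑' i, v i • x i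
      map_add' := fun v w => by
        rw [← (hsum v).tsum_add (hsum w)]
        simp [add_smul]
      map_smul' := fun c v => by
        rw [RingHom.id_apply, ← (hsum v).tsum_const_smul c]
        simp [mul_smul] }
  let T : c0 →L[ℝ] X := T0.mkContinuous C (by
    intro v
    by_cases hv : v = 0
    · subst hv; simp
    · have hv' : 0 < ‖v‖ := norm_pos_iff.2 hv
      refine le_of_tendsto' (hsum v).hasSum.norm (fun s => ?_)
      exact hC s v _ hv' (fun i _ => c0_apply_le v i))
  refine ⟨T, fun M => ?_⟩
  change ∑' i, (∑ j ∈ M, e j) i • x i = _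
  rw [tsum_eq_sum (s := M)]
  · refine Finset.sum_congr rfl fun i hi => ?_
    rw [e_sum_apply, if_pos hi, one_smul]
  · intro i hi
    rw [e_sum_apply, if_neg hi, zero_smul]

lemma e_sum_norm (M : Finset ℕ) : ‖∑ j ∈ M, e j‖ ≤ 1 := by
  refine c0_norm_le _ zero_le_one fun i => ?_
  rw [e_sum_apply]
  split_ifs <;> simp

lemma wg_of_relWeakCompact [CompleteSpace X] {P : X → Y}
    (H : ∀ s : Set X, IsWUCSet s → RelWeakCompact (P '' s)) : WG P := by
  intro x hx
  obtain ⟨T, hT⟩ := exists_op hx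
  refine ⟨_, H _ ⟨T, rfl⟩, fun M => subset_closure ⟨_, ⟨_, ⟨∑ i ∈ M, e i, ?_, hT M⟩, rfl⟩, rfl⟩⟩
  simpa using e_sum_norm M

lemma ucpoly_of_nc [CompleteSpace Y] {P : X → Y} (H : NC P) : UCPoly P := by
  intro x hx
  apply cauchySeq_tendsto_of_complete
  rw [Metric.cauchySeq_iff']
  intro δ hδ
  obtain ⟨m, hm⟩ := H x hx (δ / 2) (by positivity)
  refine ⟨m, fun n hn => ?_⟩
  rw [dist_eq_norm]
  refine lt_of_le_of_lt (hm _ _ ?_) (half_lt_self hδ)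
  intro i hi
  simp only [Finset.mem_range]
  omega

/-- Bounded variation of a sequence in `c₀`, coordinatewise, gives a w.u.C. series. -/
lemma wuc_of_bv (T : c0 →L[ℝ] X) (d : ℕ → c0) (C : ℝ) (hC : 0 ≤ C)
    (hd : ∀ N i, ∑ n ∈ Finset.range N, |d n i| ≤ C) : WUC (fun n => T (d n)) := by
  intro φ
  refine summable_of_sum_range_le (c := ‖φ.comp T‖ * C) (fun n => abs_nonneg _) fun N => ?_
  have h1 : ∑ n ∈ Finset.range N, |φ (T (d n))| =
      φ.comp T (∑ n ∈ Finset.range N, (SignType.sign (φ (T (d n))) : ℝ) • d n) := by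
    rw [map_sum]
    refine Finset.sum_congr rfl fun n _ => ?_
    simp [sign_mul_self]
  rw [h1]
  refine (le_abs_self _).trans (((φ.comp T).le_opNorm _).trans ?_)
  refine mul_le_mul_of_nonneg_left (c0_norm_le _ hC fun i => ?_) (norm_nonneg _)
  rw [c0_sum_apply]
  refine (Finset.abs_sum_le_sum_abs _ _).trans (le_trans (Finset.sum_le_sum fun n _ => ?_) (hd N i))
  rw [ZeroAtInftyContinuousMap.smul_apply, smul_eq_mul, abs_mul]
  refine mul_le_of_le_one_left (abs_nonneg _) ?_
  rcases lt_trichotomy (φ (T (d n))) 0 with h | h | h <;> simp [h]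

lemma ind_step {I0 I1 I2 : Prop} [Decidable I0] [Decidable I1] [Decidable I2] {a b c δ : ℝ}
    (h01 : I0 → I1) (h12 : I1 → I2) (ha : |a| ≤ 1) (hb : |b| ≤ 1) (hδ : 0 ≤ δ)
    (hI0 : I0 → |a - c| ≤ δ) (hI1 : I1 → |b - c| ≤ δ)
    (hn1 : ¬ I1 → |a| ≤ δ) (hn2 : ¬ I2 → |b| ≤ δ) :
    |b - a| ≤ 2 * δ + 2 * ((if I2 then 1 else 0) - (if I0 then 1 else 0)) := by
  rw [abs_le] at *
  by_cases h0 : I0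
  · have h1 := h01 h0
    have h2 := h12 h1
    have A := hI0 h0
    have B := hI1 h1
    simp only [h0, h2, if_true]
    constructor <;> linarith
  · by_cases h2 : I2
    · simp only [h0, h2, if_true, if_false]
      constructor <;> linarith
    · have h1 : ¬ I1 := fun h => h2 (h12 h)
      have A := hn1 h1
      have B := hn2 h2
      simp only [h0, h2, if_false]
      constructor <;> linarith

/-- Every sequence in the unit ball of `c₀` has a subsequence of bounded variation. -/
lemma exists_bv (c : ℕ → c0) (hc : ∀ n, ‖c n‖ ≤ 1) :
    ∃ φ : ℕ → ℕ, StrictMono φ ∧ ∀ N i,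
      ∑ n ∈ Finset.range N, |(c (φ (n + 1)) - c (φ n)) i| ≤ 8 := by
  have hcpt : IsCompact (Set.pi Set.univ (fun _ : ℕ => Set.Icc (-1 : ℝ) 1)) :=
    isCompact_univ_pi fun _ => isCompact_Icc
  obtain ⟨z, -, φ, hφ, hz⟩ := hcpt.isSeqCompact (x := fun n i => c n i) (by
    intro n i _
    exact abs_le.1 ((c0_apply_le _ i).trans (hc n)))
  rw [tendsto_pi_nhds] at hz
  have htail : ∀ k n : ℕ, ∃ m, ∀ i ≥ m, |c (φ k) i| ≤ (1 / 2) ^ n := by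
    intro k n
    have := c0_tail (c (φ k)) (show (0 : ℝ) < (1 / 2) ^ n by positivity)
    rw [Nat.cofinite_eq_atTop, Filter.eventually_atTop] at this
    obtain ⟨m, hm⟩ := this
    exact ⟨m, fun i hi => (hm i hi).le⟩
  have hhead : ∀ m n : ℕ, ∃ K, ∀ k ≥ K, ∀ i < m, |c (φ k) i - z i| ≤ (1 / 2) ^ n := by
    intro m n
    have : ∀ᶠ k in atTop, ∀ i ∈ Finset.range m, |c (φ k) i - z i| ≤ (1 / 2) ^ n := by
      rw [Filter.eventually_all_finset]
      intro i _
      have := (hz i).eventually (Metric.closedBall_mem_nhds (z i)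
        (show (0 : ℝ) < (1 / 2) ^ n by positivity))
      filter_upwards [this] with k hk
      exact hk
    obtain ⟨K, hK⟩ := Filter.eventually_atTop.1 this
    exact ⟨K, fun k hk i hi => hK k hk i (Finset.mem_range.2 hi)⟩
  choose t ht using htail
  choose hd hhd using hhead
  let s : ℕ → ℕ × ℕ := fun n => Nat.rec (0, 0) (fun n p =>
    (max (p.1 + 1) (hd (max p.2 (t p.1 n)) (n + 1)), max p.2 (t p.1 n))) n
  have hs0 : s 0 = (0, 0) := rfl
  have hs1 : ∀ n, (s (n + 1)).1 = max ((s n).1 + 1) (hd (s (n + 1)).2 (n + 1)) := fun n => rfl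
  have hs2 : ∀ n, (s (n + 1)).2 = max (s n).2 (t (s n).1 n) := fun n => rfl
  have hkm : StrictMono (fun n => (s n).1) := strictMono_nat_of_lt_succ fun n => by
    rw [hs1]; exact lt_of_lt_of_le (Nat.lt_succ_self _) (le_max_left _ _)
  have hmm : ∀ n, (s n).2 ≤ (s (n + 1)).2 := fun n => by
    rw [hs2]; exact le_max_left _ _
  have p1 : ∀ n i, i < (s n).2 → |c (φ (s n).1) i - z i| ≤ (1 / 2) ^ n := by
    intro n i hi
    cases n with
    | zero => rw [hs0] at hi; simp at hi
    | succ n => exact hhd _ _ _ (by rw [hs1 n]; exact le_max_right _ _) i hi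
  have p2 : ∀ n i, ¬ i < (s (n + 1)).2 → |c (φ (s n).1) i| ≤ (1 / 2) ^ n := by
    intro n i hi
    refine ht _ _ _ ?_
    have := le_max_right (s n).2 (t (s n).1 n)
    rw [← hs2] at this
    omega
  refine ⟨fun n => φ (s n).1, hφ.comp hkm, fun N i => ?_⟩
  have hpow : ∀ n : ℕ, ((1 : ℝ) / 2) ^ (n + 1) ≤ (1 / 2) ^ n := fun n => by
    rw [pow_succ]
    have : (0 : ℝ) ≤ (1 / 2) ^ n := by positivity
    linarith
  have hstep : ∀ n, |(c (φ (s (n + 1)).1) - c (φ (s n).1)) i| ≤ 2 * (1 / 2) ^ n +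
      2 * ((if i < (s (n + 2)).2 then 1 else 0) - (if i < (s n).2 then 1 else 0)) := by
    intro n
    rw [ZeroAtInftyContinuousMap.sub_apply]
    refine ind_step (I1 := i < (s (n + 1)).2) (c := z i) (fun h => h.trans_le (hmm _))
      (fun h => h.trans_le (hmm (n + 1))) ((c0_apply_le _ i).trans (hc _))
      ((c0_apply_le _ i).trans (hc _)) (by positivity) (p1 n i)
      (fun h => (p1 (n + 1) i h).trans (hpow n)) (p2 n i)
      (fun h => (p2 (n + 1) i h).trans (hpow n))
  have hind : ∀ n, (0 : ℝ) ≤ (if i < (s n).2 then 1 else 0) ∧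
      (if i < (s n).2 then (1 : ℝ) else 0) ≤ 1 := by
    intro n; split_ifs <;> simp
  have hsum : ∑ n ∈ Finset.range N, |(c (φ (s (n + 1)).1) - c (φ (s n).1)) i| ≤
      4 - 4 * (1 / 2) ^ N +
      2 * ((if i < (s (N + 1)).2 then 1 else 0) + (if i < (s N).2 then 1 else 0)) := by
    induction N with
    | zero =>
      have h0 := (hind 0).1
      have h1 := (hind (0 + 1)).1
      simp only [Finset.range_zero, Finset.sum_empty, pow_zero]
      linarith
    | succ N ih =>
      rw [Finset.sum_range_succ]
      have := hstep N
      rw [pow_succ]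
      linarith
  have h1 := (hind (N + 1)).2
  have h2 := (hind N).2
  have : (0 : ℝ) ≤ (1 / 2) ^ N := by positivity
  linarith

lemma relcompact_of_uc {P : X → Y} (H : UCPoly P) (s : Set X) (hs : IsWUCSet s) :
    IsCompact (closure (P '' s)) := by
  obtain ⟨T, rfl⟩ := hs
  have key : ∀ u : ℕ → Y, (∀ n, u n ∈ P '' (T '' closedBall 0 1)) →
      ∃ L, ∃ φ : ℕ → ℕ, StrictMono φ ∧ Tendsto (u ∘ φ) atTop (𝓝 L) := by
    intro u hu
    have : ∀ n, ∃ v : c0, ‖v‖ ≤ 1 ∧ P (T v) = u n := by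
      intro n
      obtain ⟨_, ⟨v, hv, rfl⟩, h⟩ := hu n
      exact ⟨v, by simpa using hv, h⟩
    choose c hc hcu using this
    obtain ⟨φ, hφ, hbv⟩ := exists_bv c hc
    have hw := wuc_cons (wuc_of_bv T (fun n => c (φ (n + 1)) - c (φ n)) 8 (by norm_num) hbv)
      (T (c (φ 0)))
    obtain ⟨L, hL⟩ := H _ hw
    refine ⟨L, φ, hφ, ?_⟩
    have h2 := (tendsto_add_atTop_iff_nat 1).2 hL
    refine h2.congr fun n => ?_
    rw [Finset.sum_range_succ']
    change P (∑ k ∈ Finset.range n, T (c (φ (k + 1)) - c (φ k)) + T (c (φ 0))) = u (φ n)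
    rw [← map_sum, Finset.sum_range_sub (fun k => c (φ k)), ← map_add, sub_add_cancel, hcu]
  refine IsSeqCompact.isCompact fun u hu => ?_
  have : ∀ n : ℕ, ∃ w ∈ P '' (T '' closedBall 0 1), dist (u n) w < 1 / ((n : ℝ) + 1) := fun n =>
    Metric.mem_closure_iff.1 (hu n) _ (by positivity)
  choose w hw hd using this
  obtain ⟨L, φ, hφ, hL⟩ := key w hw
  refine ⟨L, mem_closure_of_tendsto hL (Filter.Eventually.of_forall fun n => hw _), φ, hφ, ?_⟩
  have h0 : Tendsto (fun n => dist (w n) (u n)) atTop (𝓝 0) :=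
    squeeze_zero (fun n => dist_nonneg) (fun n => by rw [dist_comm]; exact (hd n).le)
      tendsto_one_div_add_atTop_nhds_zero_nat
  exact hL.congr_dist (h0.comp hφ.tendsto_atTop)

lemma relWeakCompact_of_compact {s : Set Y} (h : IsCompact (closure s)) : RelWeakCompact s := by
  have h1 : IsCompact ((toWeakSpaceCLM ℝ Y) '' closure s) := h.image (toWeakSpaceCLM ℝ Y).continuous
  refine h1.closure_of_subset ?_
  rintro _ ⟨y, hy, rfl⟩
  exact ⟨y, subset_closure hy, rfl⟩

end helpers

/-- `P` is unconditionally converging iff it maps WUC-sets to relatively (weakly) compact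
sets. -/
theorem uc_iff_wuc_sets_relcompact {X Y : Type*}
    [NormedAddCommGroup X] [NormedSpace ℝ X] [CompleteSpace X]
    [NormedAddCommGroup Y] [NormedSpace ℝ Y] [CompleteSpace Y]
    (k : ℕ) (hk : 1 ≤ k) (A : ContinuousMultilinearMap ℝ (fun _ : Fin k => X) Y)
    (P : X → Y) (hP : P = fun x => A fun _ => x) :
    List.TFAE
      [ UCPoly P,
        ∀ s : Set X, IsWUCSet s → IsCompact (closure (P '' s)),
        ∀ s : Set X, IsWUCSet s → RelWeakCompact (P '' s) ] := by
  tfae_have 1 → 2 := fun h s hs => relcompact_of_uc h s hs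
  tfae_have 2 → 3 := fun h s hs => relWeakCompact_of_compact (h s hs)
  tfae_have 3 → 1 := fun h => by
    refine ucpoly_of_nc (vec_nc k P ?_ (wg_of_relWeakCompact h))
    have := deg_multilinear A.toMultilinearMap k Finset.univ 0 (by simp)
    rw [hP]
    simpa using this
  tfae_finish
end
end

section
/- Let X and Y be real Banach spaces, k ≥ 1 an integer and P : X → Y a continuous k-homogeneous polynomial. The following are equivalent: (i) for every bounded linear operator T : c₀ → X, if the polynomial P∘T is compact then T is a compact operator; (ii) for every WUC-set A ⊆ X, if P(A) is relatively (norm) compact in Y then A is relatively compact in X; (iii) for every WUC-set A ⊆ X, if P(A) is relatively weakly compact in Y then A is relatively compact in X. -/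
open Filter Topology Metric

noncomputable section

/-! ### Weak compactness preliminaries -/

theorem continuous_weak_eval {Y : Type*} [NormedAddCommGroup Y] [NormedSpace ℝ Y]
    (φ : Y →L[ℝ] ℝ) : Continuous (fun w : WeakSpace ℝ Y => φ ((toWeakSpace ℝ Y).symm w)) :=
  WeakBilin.eval_continuous _ φ

theorem t2_weakSpace (Y : Type*) [NormedAddCommGroup Y] [NormedSpace ℝ Y] :
    T2Space (WeakSpace ℝ Y) := by
  refine ⟨fun x y hxy => ?_⟩
  have h1 : (toWeakSpace ℝ Y).symm x ≠ (toWeakSpace ℝ Y).symm y := by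
    intro h; exact hxy ((toWeakSpace ℝ Y).symm.injective h)
  have h2 : ∃ φ : Y →L[ℝ] ℝ, φ ((toWeakSpace ℝ Y).symm x) ≠ φ ((toWeakSpace ℝ Y).symm y) := by
    by_contra! h
    exact h1 ((SeparatingDual.eq_iff_forall_dual_eq (R := ℝ)).2 h)
  obtain ⟨φ, hφ⟩ := h2
  exact separated_by_continuous (continuous_weak_eval φ) hφ

/-- An Orlicz–Pettis type lemma with summable perturbations. -/
theorem op_lemma {Y : Type*} [NormedAddCommGroup Y] [NormedSpace ℝ Y] [CompleteSpace Y]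
    (y : ℕ → Y) (K : Set (WeakSpace ℝ Y)) (hK : IsCompact K)
    (hd : ∀ S : ℕ → Bool, ∃ d : ℕ → Y, (∀ j, ‖d j‖ ≤ (1 / 2 : ℝ) ^ j) ∧
      ∀ n, toWeakSpace ℝ Y (∑ j ∈ Finset.range n, (if S j then y j else 0) +
        ∑ j ∈ Finset.range n, d j) ∈ K) :
    Tendsto y atTop (𝓝 0) := by
  have hsd : ∀ d : ℕ → Y, (∀ j, ‖d j‖ ≤ (1 / 2 : ℝ) ^ j) → Summable d := fun d h =>
    Summable.of_norm_bounded summable_geometric_two h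
  -- absolute summability of functionals
  have h1 : ∀ φ : Y →L[ℝ] ℝ, Summable (fun j => |φ (y j)|) := by
    intro φ
    obtain ⟨C, hC⟩ := (hK.image (continuous_weak_eval φ)).isBounded.exists_norm_le
    have key : ∀ S : ℕ → Bool, ∀ n,
        |∑ j ∈ Finset.range n, (if S j then φ (y j) else 0)| ≤ C + ‖φ‖ * 2 := by
      intro S n
      obtain ⟨d, hd1, hd2⟩ := hd S
      have h3 := hC _ ⟨_, hd2 n, rfl⟩
      simp only [LinearEquiv.symm_apply_apply, map_add, map_sum, Real.norm_eq_abs] at h3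
      have h4 : |∑ j ∈ Finset.range n, φ (d j)| ≤ ‖φ‖ * 2 := by
        rw [← map_sum]
        refine (φ.le_opNorm _).trans ?_
        gcongr
        calc ‖∑ j ∈ Finset.range n, d j‖ ≤ ∑ j ∈ Finset.range n, (1 / 2 : ℝ) ^ j :=
              norm_sum_le_of_le _ (fun j _ => hd1 j)
          _ ≤ 2 := sum_geometric_two_le n
      have h5 : ∀ j, φ (if S j then y j else 0) = if S j then φ (y j) else 0 := by
        intro j; split_ifs <;> simp
      simp only [h5] at h3
      rw [abs_le] at *
      constructor <;> linarith [h3.1, h3.2, h4.1, h4.2]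
    refine summable_of_sum_range_le (c := 2 * (C + ‖φ‖ * 2)) (fun _ => abs_nonneg _) (fun n => ?_)
    have ha := key (fun j => decide (0 < φ (y j))) n
    have hb := key (fun j => decide (φ (y j) ≤ 0)) n
    have hc : ∑ j ∈ Finset.range n, |φ (y j)| =
        ∑ j ∈ Finset.range n, (if decide (0 < φ (y j)) then φ (y j) else 0) -
        ∑ j ∈ Finset.range n, (if decide (φ (y j) ≤ 0) then φ (y j) else 0) := by
      rw [← Finset.sum_sub_distrib]
      refine Finset.sum_congr rfl (fun j _ => ?_)
      by_cases h : 0 < φ (y j)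
      · simp [h, not_le.2 h, abs_of_pos h]
      · simp [h, not_lt.1 h, abs_of_nonpos (not_lt.1 h)]
    rw [hc]
    linarith [(abs_le.1 ha).2, (abs_le.1 hb).1]
  have h1' : ∀ (φ : Y →L[ℝ] ℝ) (S : ℕ → Bool),
      Summable (fun j => if S j then φ (y j) else 0) := by
    intro φ S
    refine Summable.of_norm_bounded (h1 φ) (fun j => ?_)
    split_ifs <;> simp
  -- weak sums
  have h2 : ∀ S : ℕ → Bool, ∃ σ : Y, ∀ φ : Y →L[ℝ] ℝ,
      φ σ = ∑' j, if S j then φ (y j) else 0 := by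
    intro S
    obtain ⟨d, hd1, hd2⟩ := hd S
    obtain ⟨w, -, hw⟩ := hK.exists_mapClusterPt (f := atTop) (u := fun n =>
      toWeakSpace ℝ Y (∑ j ∈ Finset.range n, (if S j then y j else 0) +
        ∑ j ∈ Finset.range n, d j)) (Filter.tendsto_principal.2 (Filter.Eventually.of_forall hd2))
    refine ⟨(toWeakSpace ℝ Y).symm w - ∑' j, d j, fun φ => ?_⟩
    have h3 := MapClusterPt.continuousAt_comp (continuous_weak_eval φ).continuousAt hw
    have h4 : Tendsto (fun n => φ (∑ j ∈ Finset.range n, (if S j then y j else 0) +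
        ∑ j ∈ Finset.range n, d j)) atTop
        (𝓝 ((∑' j, if S j then φ (y j) else 0) + φ (∑' j, d j))) := by
      simp only [map_add]
      refine Tendsto.add ?_ ((φ.continuous.tendsto _).comp (hsd d hd1).hasSum.tendsto_sum_nat)
      have := (h1' φ S).hasSum.tendsto_sum_nat
      refine this.congr (fun n => ?_)
      rw [map_sum]
      refine Finset.sum_congr rfl (fun j _ => ?_)
      split_ifs <;> simp
    have h5 : φ ((toWeakSpace ℝ Y).symm w) =
        (∑' j, if S j then φ (y j) else 0) + φ (∑' j, d j) := by
      have h6 : MapClusterPt (φ ((toWeakSpace ℝ Y).symm w)) atTop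
        (fun n => φ (∑ j ∈ Finset.range n, (if S j then y j else 0) +
        ∑ j ∈ Finset.range n, d j)) := h3
      obtain ⟨ψ, hψ, hψ2⟩ := h6.tendsto_subseq
      exact tendsto_nhds_unique hψ2 (h4.comp hψ.tendsto_atTop)
    rw [map_sub, h5]; ring
  choose σ hσ using h2
  -- separability
  have hsep : TopologicalSpace.IsSeparable
      (closure (Submodule.span ℝ (Set.range y) : Set Y)) :=
    ((Set.countable_range y).isSeparable.span (R := ℝ)).closure
  have hmem : ∀ S, σ S ∈ closure (Submodule.span ℝ (Set.range y) : Set Y) := by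
    intro S
    by_contra hn
    obtain ⟨φ, u, hu1, hu2⟩ := geometric_hahn_banach_closed_point
      (s := closure (Submodule.span ℝ (Set.range y) : Set Y))
      (Submodule.convex _).closure isClosed_closure hn
    have hz : ∀ v ∈ Submodule.span ℝ (Set.range y), φ v = 0 := by
      intro v hv
      by_contra hne
      have := hu1 (((u + 1) / φ v) • v) (subset_closure (Submodule.smul_mem _ _ hv))
      rw [map_smul, smul_eq_mul, div_mul_cancel₀ _ hne] at this
      linarith
    have h0 := hu1 0 (subset_closure (Submodule.zero_mem _))
    rw [hσ S φ] at hu2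
    have : ∀ j, φ (y j) = 0 := fun j => hz _ (Submodule.subset_span ⟨j, rfl⟩)
    simp [this] at hu2 h0
    linarith
  obtain ⟨c, hc, hcZ⟩ := hsep
  -- Baire
  rw [NormedAddGroup.tendsto_nhds_zero] 
  intro ε hε
  have : Countable c := hc.to_subtype
  have hclosed : ∀ p : c, IsClosed {S : ℕ → Bool | ‖σ S - p‖ ≤ ε / 3} := by
    intro p
    have : {S : ℕ → Bool | ‖σ S - p‖ ≤ ε / 3} =
        ⋂ φ : Y →L[ℝ] ℝ, {S | ‖(∑' j, if S j then φ (y j) else 0) - φ p‖ ≤ ε / 3 * ‖φ‖} := by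
      ext S
      simp only [Set.mem_ofPred_eq, Set.mem_iInter]
      constructor
      · intro h φ
        rw [← hσ S φ, ← map_sub]
        refine (φ.le_opNorm _).trans ?_
        rw [mul_comm]; gcongr
      · intro h
        refine NormedSpace.norm_le_dual_bound ℝ _ (by positivity) (fun φ => ?_)
        rw [map_sub, hσ S φ]; exact h φ
    rw [this]
    refine isClosed_iInter (fun φ => ?_)
    refine isClosed_le (Continuous.norm (Continuous.sub ?_ continuous_const)) continuous_const
    refine continuous_tsum (u := fun j => |φ (y j)|) (fun j => ?_) (h1 φ) (fun j S => ?_)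
    · have h : Continuous (fun b : Bool => if b then φ (y j) else 0) :=
        continuous_of_discreteTopology
      exact h.comp (continuous_apply j)
    · split_ifs <;> simp
  have hU : (⋃ p : c, {S : ℕ → Bool | ‖σ S - p‖ ≤ ε / 3}) = Set.univ := by
    refine Set.eq_univ_of_forall (fun S => ?_)
    obtain ⟨p, hp, hpd⟩ := Metric.mem_closure_iff.1 (hcZ (hmem S)) (ε / 3) (by positivity)
    rw [dist_eq_norm] at hpd
    exact Set.mem_iUnion.2 ⟨⟨p, hp⟩, hpd.le⟩
  obtain ⟨p, S0, hS0⟩ := nonempty_interior_of_iUnion_of_closed hclosed hU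
  have htend : ∀ b : Bool, Tendsto (fun j => Function.update S0 j b) atTop (𝓝 S0) := by
    intro b
    rw [tendsto_pi_nhds]
    intro i
    refine tendsto_const_nhds.congr' ?_
    filter_upwards [eventually_gt_atTop i] with j hj
    rw [Function.update_of_ne (by omega)]
  have hnb := isOpen_interior.mem_nhds hS0
  filter_upwards [htend true hnb, htend false hnb] with j hj1 hj2
  have hj1' := interior_subset hj1
  have hj2' := interior_subset hj2
  simp only [Set.mem_ofPred_eq] at hj1' hj2'
  have heq : y j = σ (Function.update S0 j true) - σ (Function.update S0 j false) := by
    refine (SeparatingDual.eq_iff_forall_dual_eq (R := ℝ)).2 (fun φ => ?_)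
    rw [map_sub, hσ, hσ, ← (h1' φ _).tsum_sub (h1' φ _)]
    rw [tsum_eq_single j]
    · simp
    · intro i hi
      simp [Function.update_of_ne hi]
  have : y j = (σ (Function.update S0 j true) - p) - (σ (Function.update S0 j false) - p) := by
    rw [heq]; abel
  rw [this]
  have := norm_sub_le (σ (Function.update S0 j true) - p) (σ (Function.update S0 j false) - p)
  linarith

/-! ### Elementary facts about `c0` -/

theorem c0_norm_le_s13 {r : ℝ} (hr : 0 ≤ r) (x : c0) : ‖x‖ ≤ r ↔ ∀ i, |x i| ≤ r := by
  rw [← ZeroAtInftyContinuousMap.norm_toBCF_eq_norm, BoundedContinuousFunction.norm_le hr]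
  rfl

theorem c0_abs_le (x : c0) (i : ℕ) : |x i| ≤ ‖x‖ :=
  (c0_norm_le_s13 (norm_nonneg x) x).1 le_rfl i

/-- `t` is supported in `[M, N)`. -/
def SuppIn (t : c0) (M N : ℕ) : Prop := ∀ i, (i < M ∨ N ≤ i) → t i = 0

/-- The projection onto the first `N` coordinates. -/
def c0proj (N : ℕ) (x : c0) : c0 := ∑ i ∈ Finset.range N, x i • e i

theorem c0sum_apply (N : ℕ) (a : ℕ → ℝ) (i : ℕ) :
    (∑ j ∈ Finset.range N, a j • e j : c0) i = if i < N then a i else 0 := by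
  induction N with
  | zero => simp
  | succ n ih =>
    rw [Finset.sum_range_succ, ZeroAtInftyContinuousMap.add_apply, ih,
      ZeroAtInftyContinuousMap.smul_apply]
    have : (e n) i = if i = n then (1 : ℝ) else 0 := rfl
    rw [this]
    by_cases h1 : i < n
    · simp [h1, h1.ne, Nat.lt_succ_of_lt h1]
    · by_cases h2 : i = n
      · subst h2; simp
      · simp [h1, h2, show ¬ i < n + 1 by omega]

theorem c0proj_apply (N : ℕ) (x : c0) (i : ℕ) :
    (c0proj N x) i = if i < N then x i else 0 := c0sum_apply N x i

theorem c0proj_norm_le (N : ℕ) (x : c0) : ‖c0proj N x‖ ≤ ‖x‖ := by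
  rw [c0_norm_le_s13 (norm_nonneg x)]
  intro i
  rw [c0proj_apply]
  split_ifs
  · exact c0_abs_le x i
  · simp

theorem c0proj_sub_norm_le (N : ℕ) (x : c0) : ‖x - c0proj N x‖ ≤ ‖x‖ := by
  rw [c0_norm_le_s13 (norm_nonneg x)]
  intro i
  rw [ZeroAtInftyContinuousMap.sub_apply, c0proj_apply]
  split_ifs
  · simp
  · simpa using c0_abs_le x i

theorem c0proj_supp (N : ℕ) (x : c0) : SuppIn (c0proj N x) 0 N := by
  intro i hi
  rw [c0proj_apply, if_neg (by omega)]

theorem c0proj_tendsto (x : c0) : Tendsto (fun N => c0proj N x) atTop (𝓝 x) := by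
  rw [Metric.tendsto_atTop]
  intro ε hε
  have h := x.zero_at_infty'
  rw [Filter.cocompact_eq_cofinite, Nat.cofinite_eq_atTop] at h
  obtain ⟨N, hN⟩ := Metric.tendsto_atTop.1 h (ε / 2) (by positivity)
  refine ⟨N, fun n hn => ?_⟩
  rw [dist_comm, dist_eq_norm]
  refine lt_of_le_of_lt ?_ (half_lt_self hε)
  rw [c0_norm_le_s13 (by positivity)]
  intro i
  rw [ZeroAtInftyContinuousMap.sub_apply, c0proj_apply]
  split_ifs with h1
  · simpa using (half_pos hε).le
  · have := hN i (by omega)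
    rw [Real.dist_eq, sub_zero] at this
    rw [sub_zero]
    exact this.le

theorem head_totallyBounded (N : ℕ) (r : ℝ) :
    TotallyBounded {h : c0 | ‖h‖ ≤ r ∧ SuppIn h 0 N} := by
  have hc : IsCompact (Set.pi Set.univ (fun _ : ℕ => Set.Icc (-r) r)) :=
    isCompact_univ_pi (fun _ => isCompact_Icc)
  have hcont : Continuous (fun a : ℕ → ℝ => (∑ j ∈ Finset.range N, a j • e j : c0)) := by
    fun_prop
  refine (hc.image hcont).totallyBounded.subset ?_
  rintro h ⟨h1, h2⟩
  refine ⟨fun i => h i, ?_, ?_⟩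
  · intro i _
    exact abs_le.1 ((c0_abs_le h i).trans h1)
  · ext i
    simp only [c0sum_apply]
    split_ifs with hi
    · rfl
    · exact (h2 i (Or.inr (not_lt.1 hi))).symm

theorem supp_add {h t : c0} {N N' : ℕ} {r : ℝ} (hNN : N ≤ N') (h1 : SuppIn h 0 N)
    (h2 : SuppIn t N N') (h3 : ‖h‖ ≤ r) (h4 : ‖t‖ ≤ r) :
    SuppIn (h + t) 0 N' ∧ ‖h + t‖ ≤ r := by
  constructor
  · intro i hi
    rw [ZeroAtInftyContinuousMap.add_apply, h1 i (by omega), h2 i (by omega), add_zero]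
  · rw [c0_norm_le_s13 ((norm_nonneg _).trans h3)]
    intro i
    rw [ZeroAtInftyContinuousMap.add_apply]
    by_cases hi : i < N
    · rw [h2 i (Or.inl hi), add_zero]; exact (c0_abs_le h i).trans h3
    · rw [h1 i (Or.inr (not_lt.1 hi)), zero_add]; exact (c0_abs_le t i).trans h4

/-! ### Maps of finite degree -/

/-- `f` has degree at most `k` in the sense of finite differences. -/
def DegLE {Y : Type*} [AddCommGroup Y] : ℕ → (c0 → Y) → Prop
  | 0, f => ∀ x y, f x = f y
  | k + 1, f => ∀ h, DegLE k (fun x => f (x + h) - f x)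

theorem DegLE.const {Y : Type*} [AddCommGroup Y] (k : ℕ) (c : Y) :
    DegLE k (fun _ : c0 => c) := by
  induction k generalizing c with
  | zero => intro x y; rfl
  | succ k ih => intro h; simpa using ih 0

theorem DegLE.add {Y : Type*} [AddCommGroup Y] (k : ℕ) {f g : c0 → Y} (hf : DegLE k f)
    (hg : DegLE k g) : DegLE k (fun x => f x + g x) := by
  induction k generalizing f g with
  | zero => intro x y; simp only [hf x y, hg x y]
  | succ k ih =>
    intro h
    have := ih (hf h) (hg h)
    convert this using 2
    exact add_sub_add_comm _ _ _ _

theorem DegLE.sum {Y ι : Type*} [AddCommGroup Y] (k : ℕ) (s : Finset ι) {f : ι → c0 → Y}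
    (hf : ∀ i ∈ s, DegLE k (f i)) : DegLE k (fun x => ∑ i ∈ s, f i x) := by
  classical
  induction s using Finset.induction_on with
  | empty => simpa using DegLE.const k (0 : Y)
  | insert a s ha ih =>
    simp only [Finset.sum_insert ha]
    exact DegLE.add k (hf a (by simp)) (ih (fun i hi => hf i (by simp [hi])))

theorem degLE_multilinear {Y ι : Type*} [AddCommGroup Y] [Module ℝ Y] [DecidableEq ι]
    (A : MultilinearMap ℝ (fun _ : ι => c0) Y) (k : ℕ) (s : Finset ι) (hs : s.card ≤ k)
    (m : ι → c0) : DegLE k (fun x => A (s.piecewise (fun _ => x) m)) := by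
  induction k generalizing s m with
  | zero =>
    have : s = ∅ := by simpa using hs
    subst this
    intro x y; simp
  | succ k ih =>
    intro h
    have key : ∀ x, A (s.piecewise (fun _ => x + h) m) - A (s.piecewise (fun _ => x) m) =
        ∑ s' ∈ s.powerset.erase s,
          A (s'.piecewise (fun _ => x) (s.piecewise (fun _ => h) m)) := by
      intro x
      have h1 := A.map_piecewise_add (fun _ => x) (s.piecewise (fun _ => h) m) s
      have h2 : s.piecewise ((fun _ => x) + s.piecewise (fun _ => h) m)
          (s.piecewise (fun _ => h) m) = s.piecewise (fun _ => x + h) m := by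
        ext1 i
        by_cases hi : i ∈ s <;> simp [hi]
      rw [h2, ← Finset.add_sum_erase _ _ (Finset.mem_powerset_self s)] at h1
      have h3 : s.piecewise (fun _ => x) (s.piecewise (fun _ => h) m) =
          s.piecewise (fun _ => x) m := by
        ext1 i
        by_cases hi : i ∈ s <;> simp [hi]
      rw [h1, h3]; abel
    simp only [key]
    refine DegLE.sum k _ (fun s' hs' => ih s' ?_ _)
    rw [Finset.mem_erase, Finset.mem_powerset] at hs'
    have := Finset.card_lt_card (Finset.ssubset_iff_subset_ne.2 ⟨hs'.2, hs'.1⟩)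
    omega

/-- The class of maps used in the induction. -/
structure GoodMap {Y : Type*} [NormedAddCommGroup Y] [NormedSpace ℝ Y] (k : ℕ)
    (f : c0 → Y) : Prop where
  deg : DegLE k f
  lip : ∀ r : ℝ, ∃ L : ℝ, 0 ≤ L ∧ ∀ x y, ‖x‖ ≤ r → ‖y‖ ≤ r → ‖f x - f y‖ ≤ L * ‖x - y‖
  wc : ∀ r : ℝ, ∃ K : Set (WeakSpace ℝ Y), IsCompact K ∧ ∀ x, ‖x‖ ≤ r → toWeakSpace ℝ Y (f x) ∈ K

theorem GoodMap.diff {Y : Type*} [NormedAddCommGroup Y] [NormedSpace ℝ Y] {k : ℕ}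
    {f : c0 → Y} (hf : GoodMap (k + 1) f) (h : c0) : GoodMap k (fun x => f (x + h) - f x) where
  deg := hf.deg h
  lip := by
    intro r
    obtain ⟨L, hL, hLf⟩ := hf.lip (r + ‖h‖)
    refine ⟨L + L, by positivity, fun x y hx hy => ?_⟩
    have h1 := hLf (x + h) (y + h) ((norm_add_le _ _).trans (by linarith))
      ((norm_add_le _ _).trans (by linarith))
    have h2 := hLf x y (by linarith [norm_nonneg h]) (by linarith [norm_nonneg h])
    rw [add_sub_add_right_eq_sub] at h1
    have h3 : f (x + h) - f x - (f (y + h) - f y) = (f (x + h) - f (y + h)) - (f x - f y) := by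
      abel
    rw [h3]
    refine (norm_sub_le _ _).trans ?_
    linarith
  wc := by
    intro r
    obtain ⟨K1, hK1, h1⟩ := hf.wc (r + ‖h‖)
    obtain ⟨K2, hK2, h2⟩ := hf.wc r
    refine ⟨(fun p : WeakSpace ℝ Y × WeakSpace ℝ Y => p.1 - p.2) '' (K1 ×ˢ K2),
      (hK1.prod hK2).image continuous_sub, fun x hx => ?_⟩
    refine ⟨(_, _), ⟨h1 (x + h) ((norm_add_le _ _).trans (by linarith)), h2 x hx⟩, ?_⟩
    simp

/-- Behaviour along tails. -/
def TailNull {Y : Type*} [NormedAddCommGroup Y] (f : c0 → Y) : Prop :=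
  ∀ r ε : ℝ, 0 < ε → ∀ᶠ M in atTop, ∀ (N : ℕ) (t : c0), SuppIn t M N → ‖t‖ ≤ r →
    ‖f t - f 0‖ ≤ ε

theorem mixed_small {Y : Type*} [NormedAddCommGroup Y] [NormedSpace ℝ Y] {k : ℕ}
    (IH : ∀ g : c0 → Y, GoodMap k g → TailNull g)
    {f : c0 → Y} (hf : GoodMap (k + 1) f) (r : ℝ) (N : ℕ) (η : ℝ) (hη : 0 < η) :
    ∀ᶠ M in atTop, ∀ (h : c0), ‖h‖ ≤ r → SuppIn h 0 N → ∀ (N' : ℕ) (t : c0),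
      SuppIn t M N' → ‖t‖ ≤ r → ‖f (h + t) - f h - f t + f 0‖ ≤ η := by
  obtain ⟨L, hL, hLf⟩ := hf.lip (r + r)
  have hδ : 0 < η / (3 * (L + 1)) := by positivity
  obtain ⟨F, hFs, hFfin, hF⟩ := Metric.finite_approx_of_totallyBounded
    (head_totallyBounded N r) _ hδ
  have h1 : ∀ᶠ M in atTop, ∀ h' ∈ F, ∀ (N : ℕ) (t : c0), SuppIn t M N → ‖t‖ ≤ r →
      ‖(f (t + h') - f t) - (f (0 + h') - f 0)‖ ≤ η / 3 :=
    (Filter.eventually_all_finite hFfin).2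
      (fun h' _ => IH _ (hf.diff h') r (η / 3) (by positivity))
  filter_upwards [h1] with M hM h hh hsupp N' t ht htr
  have hr : 0 ≤ r := (norm_nonneg _).trans hh
  obtain ⟨h', hh'F, hdist⟩ := Set.mem_iUnion₂.1 (hF ⟨hh, hsupp⟩)
  have hh' : ‖h'‖ ≤ r := (hFs hh'F).1
  rw [Metric.mem_ball, dist_eq_norm] at hdist
  have a1 := hM h' hh'F N' t ht htr
  have a2 := hLf (h + t) (h' + t) ((norm_add_le _ _).trans (by linarith))
    ((norm_add_le _ _).trans (by linarith))
  have a3 := hLf h h' (by linarith) (by linarith)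
  rw [add_sub_add_right_eq_sub] at a2
  have a4 : L * ‖h - h'‖ ≤ η / 3 := by
    calc L * ‖h - h'‖ ≤ (L + 1) * (η / (3 * (L + 1))) := by gcongr; linarith
      _ = η / 3 := by field_simp
  have a5 : f (h + t) - f h - f t + f 0 = (f (h + t) - f (h' + t)) - (f h - f h') +
      ((f (t + h') - f t) - (f (0 + h') - f 0)) := by
    rw [add_comm t h', zero_add]; abel
  rw [a5]
  refine (norm_add_le _ _).trans ?_
  have a6 := norm_sub_le (f (h + t) - f (h' + t)) (f h - f h')
  linarith

theorem tail_null {Y : Type*} [NormedAddCommGroup Y] [NormedSpace ℝ Y] [CompleteSpace Y] (k : ℕ) :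
    ∀ f : c0 → Y, GoodMap k f → TailNull f := by
  induction k with
  | zero =>
    intro f hf r ε hε
    refine Filter.Eventually.of_forall (fun M N t _ _ => ?_)
    rw [hf.deg t 0]; simpa using hε.le
  | succ k IH =>
    intro f hf r ε hε
    by_contra hcon
    rw [Filter.not_eventually] at hcon
    have step : ∀ (N : ℕ) (j : ℕ), ∃ (N' : ℕ) (u : c0), N ≤ N' ∧ SuppIn u N N' ∧ ‖u‖ ≤ r ∧
        ε < ‖f u - f 0‖ ∧ ∀ h : c0, ‖h‖ ≤ r → SuppIn h 0 N →
          ‖f (h + u) - f h - f u + f 0‖ ≤ (1 / 2 : ℝ) ^ j := by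
      intro N j
      obtain ⟨M, hM1, hM2, hM3⟩ := (hcon.and_eventually
        ((mixed_small IH hf r N ((1 / 2 : ℝ) ^ j) (by positivity)).and
          (eventually_ge_atTop N))).exists
      push Not at hM1
      obtain ⟨N', u, hu1, hu2, hu3⟩ := hM1
      refine ⟨max N N', u, le_max_left _ _, ?_, hu2, hu3,
        fun h hh hs => hM2 h hh hs N' u hu1 hu2⟩
      intro i hi
      refine hu1 i ?_
      rcases hi with hi | hi
      · exact Or.inl (by omega)
      · exact Or.inr ((le_max_right _ _).trans hi)
    choose nx uu hstep using step
    let Nn : ℕ → ℕ := fun n => Nat.rec 0 (fun j N => nx N j) n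
    have hNn : ∀ j, Nn (j + 1) = nx (Nn j) j := fun j => rfl
    let u : ℕ → c0 := fun j => uu (Nn j) j
    have hu : ∀ j, Nn j ≤ Nn (j + 1) ∧ SuppIn (u j) (Nn j) (Nn (j + 1)) ∧ ‖u j‖ ≤ r ∧
        ε < ‖f (u j) - f 0‖ ∧ ∀ h : c0, ‖h‖ ≤ r → SuppIn h 0 (Nn j) →
          ‖f (h + u j) - f h - f (u j) + f 0‖ ≤ (1 / 2 : ℝ) ^ j := fun j => hstep (Nn j) j
    have hr : 0 ≤ r := (norm_nonneg _).trans (hu 0).2.2.1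
    let s : (ℕ → Bool) → ℕ → c0 := fun S n => ∑ i ∈ Finset.range n, if S i then u i else 0
    have hs1 : ∀ S n, s S (n + 1) = s S n + if S n then u n else 0 := fun S n =>
      Finset.sum_range_succ _ _
    have hs : ∀ S n, SuppIn (s S n) 0 (Nn n) ∧ ‖s S n‖ ≤ r := by
      intro S n
      induction n with
      | zero =>
        refine ⟨fun i _ => by simp [s], by simpa [s] using hr⟩
      | succ n ih =>
        rw [hs1]
        refine supp_add (hu n).1 ih.1 ?_ ih.2 ?_
        · split_ifs
          · exact (hu n).2.1
          · intro i _; simp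
        · split_ifs
          · exact (hu n).2.2.1
          · simpa using hr
    obtain ⟨K, hK, hKf⟩ := hf.wc r
    have hlim := op_lemma (fun j => f (u j) - f 0)
      ((fun w => w - toWeakSpace ℝ Y (f 0)) '' K)
      (hK.image (continuous_id.sub continuous_const)) (by
        intro S
        refine ⟨fun j => f (s S (j + 1)) - f (s S j) - (if S j then f (u j) - f 0 else 0),
          fun j => ?_, fun n => ?_⟩
        · simp only [hs1]
          by_cases hS : S j
          · simp only [hS, if_true]
            have := (hu j).2.2.2.2 (s S j) (hs S j).2 (hs S j).1
            convert this using 2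
            abel
          · simp [hS]
        · refine ⟨_, hKf (s S n) (hs S n).2, ?_⟩
          rw [← Finset.sum_add_distrib]
          simp only [add_sub_cancel]
          rw [Finset.sum_range_sub (fun j => f (s S j))]
          simp [s])
    rw [NormedAddGroup.tendsto_nhds_zero] at hlim
    obtain ⟨j, hj⟩ := (hlim ε hε).exists
    exact absurd hj (not_lt.2 (hu j).2.2.2.1.le)

theorem tail_null_full {Y : Type*} [NormedAddCommGroup Y] [NormedSpace ℝ Y] [CompleteSpace Y]
    {k : ℕ} {f : c0 → Y} (hf : GoodMap k f) (r ε : ℝ) (hε : 0 < ε) :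
    ∃ M, ∀ t : c0, (∀ i < M, t i = 0) → ‖t‖ ≤ r → ‖f t - f 0‖ ≤ ε := by
  obtain ⟨M, hM⟩ := (tail_null k f hf r ε hε).exists
  refine ⟨M, fun t ht htr => ?_⟩
  obtain ⟨L, hL, hLf⟩ := hf.lip r
  have hlim : Tendsto (fun N => f (c0proj N t)) atTop (𝓝 (f t)) := by
    rw [tendsto_iff_norm_sub_tendsto_zero]
    have h1 : Tendsto (fun N => L * ‖c0proj N t - t‖) atTop (𝓝 0) := by
      have := (tendsto_iff_norm_sub_tendsto_zero.1 (c0proj_tendsto t)).const_mul L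
      simpa using this
    refine squeeze_zero (fun _ => norm_nonneg _) (fun N => ?_) h1
    exact hLf _ _ ((c0proj_norm_le N t).trans htr) htr
  refine le_of_tendsto (hlim.sub_const (f 0)).norm (Filter.Eventually.of_forall (fun N => ?_))
  refine hM N _ ?_ ((c0proj_norm_le N t).trans htr)
  intro i hi
  rw [c0proj_apply]
  split_ifs with h
  · exact ht i (by omega)
  · rfl

theorem totallyBounded_of_approx {Y : Type*} [PseudoMetricSpace Y] {A : Set Y}
    (h : ∀ ε > 0, ∃ s : Set Y, TotallyBounded s ∧ ∀ y ∈ A, ∃ z ∈ s, dist y z < ε) :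
    TotallyBounded A := by
  rw [Metric.totallyBounded_iff]
  intro ε hε
  obtain ⟨s, hs, hsA⟩ := h (ε / 2) (by positivity)
  obtain ⟨F, hF, hFs⟩ := Metric.totallyBounded_iff.1 hs (ε / 2) (by positivity)
  refine ⟨F, hF, fun y hy => ?_⟩
  obtain ⟨z, hz, hyz⟩ := hsA y hy
  obtain ⟨w, hw, hzw⟩ := Set.mem_iUnion₂.1 (hFs hz)
  refine Set.mem_iUnion₂.2 ⟨w, hw, ?_⟩
  rw [Metric.mem_ball] at *
  linarith [dist_triangle y z w]

theorem good_totallyBounded {Y : Type*} [NormedAddCommGroup Y] [NormedSpace ℝ Y]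
    [CompleteSpace Y] (k : ℕ) : ∀ (f : c0 → Y), GoodMap k f → ∀ r : ℝ,
      TotallyBounded (f '' Metric.closedBall 0 r) := by
  induction k with
  | zero =>
    intro f hf r
    refine (totallyBounded_singleton (f 0)).subset ?_
    rintro _ ⟨x, -, rfl⟩
    exact hf.deg x 0
  | succ k IH =>
    intro f hf r
    refine totallyBounded_of_approx (fun ε hε => ?_)
    obtain ⟨M, hM⟩ := tail_null_full hf r (ε / 3) (by positivity)
    obtain ⟨L, hL, hLf⟩ := hf.lip (r + r)
    have hδ : 0 < ε / (3 * (L + 1)) := by positivity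
    obtain ⟨F, hFs, hFfin, hF⟩ := Metric.finite_approx_of_totallyBounded
      (head_totallyBounded M r) _ hδ
    refine ⟨⋃ h ∈ F, (fun w => w + f 0) '' ((fun x => f (x + h) - f x) '' Metric.closedBall 0 r),
      ?_, ?_⟩
    · refine (totallyBounded_biUnion hFfin).2 (fun h _ => ?_)
      exact (IH _ (hf.diff h) r).image (uniformContinuous_id.add uniformContinuous_const)
    · rintro _ ⟨x, hx, rfl⟩
      rw [mem_closedBall_zero_iff] at hx
      have hp : ‖c0proj M x‖ ≤ r := (c0proj_norm_le M x).trans hx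
      obtain ⟨h, hhF, hdist⟩ := Set.mem_iUnion₂.1 (hF ⟨hp, c0proj_supp M x⟩)
      have hh : ‖h‖ ≤ r := (hFs hhF).1
      rw [Metric.mem_ball, dist_eq_norm] at hdist
      set t := x - c0proj M x with ht
      have htr : ‖t‖ ≤ r := (c0proj_sub_norm_le M x).trans hx
      refine ⟨f (t + h) - f t + f 0, Set.mem_iUnion₂.2 ⟨h, hhF, _, ⟨t, by simpa using htr, rfl⟩,
        rfl⟩, ?_⟩
      have hr : 0 ≤ r := (norm_nonneg _).trans hh
      have a1 := hM t (fun i hi => by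
        rw [ht, ZeroAtInftyContinuousMap.sub_apply, c0proj_apply, if_pos hi, sub_self]) htr
      have a2 := hLf x (t + h) (by linarith) ((norm_add_le _ _).trans (by linarith))
      have a3 : x - (t + h) = c0proj M x - h := by rw [ht]; abel
      rw [a3] at a2
      have a4 : L * ‖c0proj M x - h‖ ≤ ε / 3 := by
        calc L * ‖c0proj M x - h‖ ≤ (L + 1) * (ε / (3 * (L + 1))) := by gcongr; linarith
          _ = ε / 3 := by field_simp
      rw [dist_eq_norm]
      have a5 : f x - (f (t + h) - f t + f 0) = (f x - f (t + h)) + (f t - f 0) := by abel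
      rw [a5]
      have a6 := norm_add_le (f x - f (t + h)) (f t - f 0)
      linarith

theorem goodMap_poly {X Y : Type*}
    [NormedAddCommGroup X] [NormedSpace ℝ X] [NormedAddCommGroup Y] [NormedSpace ℝ Y]
    {k : ℕ} (A : ContinuousMultilinearMap ℝ (fun _ : Fin k => X) Y) (T : c0 →L[ℝ] X)
    (hw : RelWeakCompact ((fun z => A fun _ => T z) '' Metric.closedBall 0 1)) :
    GoodMap k (fun z => A fun _ => T z) where
  deg := by
    have := degLE_multilinear
      (A.compContinuousLinearMap (fun _ => T)).toMultilinearMap k Finset.univ (by simp) 0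
    simpa using this
  lip := by
    intro r
    refine ⟨‖A‖ * k * (‖T‖ * |r|) ^ (k - 1) * ‖T‖, by positivity, fun x y hx hy => ?_⟩
    have hb : ∀ z : c0, ‖z‖ ≤ r → ‖(fun _ : Fin k => T z)‖ ≤ ‖T‖ * |r| := by
      intro z hz
      refine (pi_norm_const_le _).trans ((T.le_opNorm z).trans ?_)
      gcongr
      exact hz.trans (le_abs_self r)
    have h1 := A.norm_image_sub_le (fun _ => T x) (fun _ => T y)
    rw [Fintype.card_fin] at h1
    refine h1.trans ?_
    rw [mul_assoc _ ‖T‖]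
    gcongr
    · exact max_le (hb x hx) (hb y hy)
    · have : ((fun _ : Fin k => T x) - fun _ : Fin k => T y) = fun _ : Fin k => T (x - y) := by
        ext1 i; simp
      rw [this]
      exact (pi_norm_const_le _).trans (T.le_opNorm _)
  wc := by
    intro r
    set R : ℝ := |r| + 1 with hR
    have hRpos : 0 < R := by positivity
    refine ⟨(fun w => (R ^ k) • w) '' _, hw.image (continuous_const_smul _), fun x hx => ?_⟩
    refine ⟨toWeakSpace ℝ Y (A fun _ => T (R⁻¹ • x)),
      subset_closure ⟨_, ⟨R⁻¹ • x, ?_, rfl⟩, rfl⟩, ?_⟩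
    · rw [mem_closedBall_zero_iff, norm_smul, norm_inv, Real.norm_of_nonneg hRpos.le,
        inv_mul_le_iff₀ hRpos]
      linarith [le_abs_self r]
    · have h1 : (A fun _ => T (R⁻¹ • x)) = (R⁻¹) ^ k • A fun _ => T x := by
        have := A.map_smul_univ (fun _ => R⁻¹) (fun _ => T x)
        simpa using this
      simp only [h1]
      rw [map_smul, smul_smul, ← mul_pow, mul_inv_cancel₀ hRpos.ne', one_pow, one_smul]

/-- Characterization of condition (F) in terms of WUC-sets. -/
theorem compact_reflection_iff_wuc_sets {X Y : Type*}
    [NormedAddCommGroup X] [NormedSpace ℝ X] [CompleteSpace X]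
    [NormedAddCommGroup Y] [NormedSpace ℝ Y] [CompleteSpace Y]
    (k : ℕ) (hk : 1 ≤ k) (A : ContinuousMultilinearMap ℝ (fun _ : Fin k => X) Y)
    (P : X → Y) (hP : P = fun x => A fun _ => x) :
    List.TFAE
      [ ∀ T : c0 →L[ℝ] X, CompactMap (fun z => P (T z)) → CompactMap ⇑T,
        ∀ s : Set X, IsWUCSet s → IsCompact (closure (P '' s)) → IsCompact (closure s),
        ∀ s : Set X, IsWUCSet s → RelWeakCompact (P '' s) → IsCompact (closure s) ] := by

  have himg : ∀ T : c0 →L[ℝ] X, P '' (⇑T '' Metric.closedBall 0 1) =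
      (fun z => P (T z)) '' Metric.closedBall 0 1 := fun T => Set.image_image _ _ _
  tfae_have 1 → 3 := by
    rintro h s ⟨T, rfl⟩ hw
    refine h T ?_
    rw [himg] at hw
    subst hP
    have := good_totallyBounded k _ (goodMap_poly A T hw) 1
    exact this.closure.isCompact_of_isClosed isClosed_closure
  tfae_have 3 → 2 := by
    intro h s hs hc
    refine h s hs ?_
    have := t2_weakSpace Y
    have h1 : IsCompact (toWeakSpaceCLM ℝ Y '' closure (P '' s)) :=
      hc.image (toWeakSpaceCLM ℝ Y).continuous
    exact h1.closure_of_subset (Set.image_mono subset_closure)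
  tfae_have 2 → 1 := by
    intro h T hT
    refine h _ ⟨T, rfl⟩ ?_
    rw [himg]
    exact hT
  tfae_finish
end
end
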